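/- Let f : ℝ^n → [0,∞) be a geometric log-concave integrable function with f(0) = ‖f‖_∞ = 1, let 1 ≤ k ≤ n−1, and let H be a k-dimensional linear subspace of ℝ^n. Then ∫_H f(x) dx = vol_k(K_k(f) ∩ H), where the integral is with respect to k-dimensional Lebesgue measure on H. -/

import Mathlib

open MeasureTheory Metric Set
open scoped ENNReal RealInnerProductSpace Pointwise

noncomputable section

/-- `f` is a geometric log-concave integrable function: nonnegative, log-concave, centered,
attaining its maximum at the origin, with positive finite integral. -/
structure IsGeomLogConcave {n : ℕ} (f : EuclideanSpace ℝ (Fin n) → ℝ) : Prop where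
  nonneg : ∀ x, 0 ≤ f x
  logConcave : ∀ x y : EuclideanSpace ℝ (Fin n), ∀ a b : ℝ, 0 ≤ a → 0 ≤ b → a + b = 1 →
    f x ^ a * f y ^ b ≤ f (a • x + b • y)
  centered : (∫ x, f x • x) = (0 : EuclideanSpace ℝ (Fin n))
  maxAtZero : ∀ x, f x ≤ f 0
  integrable : Integrable f
  integral_pos : 0 < ∫ x, f x

/-- K. Ball's body `K_p(f) = { x : ∫₀^∞ r^(p−1) f(r x) dr ≥ f 0 / p }`. -/
def ballBody {n : ℕ} (p : ℝ) (f : EuclideanSpace ℝ (Fin n) → ℝ) :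
    Set (EuclideanSpace ℝ (Fin n)) :=
  {x | f 0 / p ≤ ∫ r in Set.Ioi (0:ℝ), r ^ (p - 1) * f (r • x)}

/-!
In polar coordinates on `H`, the integral of a function over `H` is the integral over the unit
sphere of `H` of its radial moments `∫₀^∞ r^(k-1) f(r θ) dr`. The radial moment is homogeneous of
degree `-k` in the direction, so the ray through `θ` meets `K_k(f)` in the segment of length
`(k / f 0 * ∫₀^∞ r^(k-1) f(r θ) dr)^(1/k)`, and therefore `f 0` times the indicator function of
`K_k(f)` has the same radial moments as `f`. These moments are finite because an integrable
log-concave function decays exponentially: a convex set of finite positive measure is bounded, so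
`f ≤ f 0 / 2` outside a ball, and log-concavity along rays propagates this to exponential decay.
-/

section LogConcave

variable {E : Type*} [AddCommGroup E] [Module ℝ E] {F : Type*} [AddCommGroup F] [Module ℝ F]

/-- A nonnegative log-concave function, in multiplicative form so that the value `0` is allowed. -/
structure IsLogConcave (f : E → ℝ) : Prop where
  nonneg : ∀ x, 0 ≤ f x
  rpow_mul_rpow_le : ∀ x y : E, ∀ a b : ℝ, 0 ≤ a → 0 ≤ b → a + b = 1 →
    f x ^ a * f y ^ b ≤ f (a • x + b • y)

namespace IsLogConcave

variable {f : E → ℝ}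

theorem comp_linearMap (hf : IsLogConcave f) (L : F →ₗ[ℝ] E) : IsLogConcave (f ∘ L) where
  nonneg x := hf.nonneg (L x)
  rpow_mul_rpow_le x y a b ha hb hab := by
    simpa using hf.rpow_mul_rpow_le (L x) (L y) a b ha hb hab

theorem convex_superlevel (hf : IsLogConcave f) (c : ℝ) : Convex ℝ {x | c ≤ f x} := by
  intro x hx y hy a b ha hb hab
  rcases le_or_gt c 0 with hc | hc
  · exact hc.trans (hf.nonneg _)
  · have hcx : c ^ a ≤ f x ^ a := Real.rpow_le_rpow hc.le hx ha
    have hcy : c ^ b ≤ f y ^ b := Real.rpow_le_rpow hc.le hy hb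
    calc c = c ^ a * c ^ b := by rw [← Real.rpow_add hc, hab, Real.rpow_one]
      _ ≤ f x ^ a * f y ^ b := by
          have := hf.nonneg x
          gcongr
      _ ≤ f (a • x + b • y) := hf.rpow_mul_rpow_le x y a b ha hb hab

theorem mul_le_sq_midpoint (hf : IsLogConcave f) (x y : E) :
    f x * f y ≤ f (midpoint ℝ x y) ^ 2 := by
  have hsqrt : √(f x * f y) ≤ f (midpoint ℝ x y) := by
    have h := hf.rpow_mul_rpow_le x y 2⁻¹ 2⁻¹ (by norm_num) (by norm_num) (by norm_num)
    rw [← Real.mul_rpow (hf.nonneg x) (hf.nonneg y), ← smul_add] at h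
    simpa [Real.sqrt_eq_rpow, midpoint_eq_smul_add] using h
  exact (Real.sqrt_le_left (hf.nonneg _)).1 hsqrt

theorem le_mul_rpow_inv_of_smul_le (hf : IsLogConcave f) (hf0 : 0 < f 0) {q t : ℝ} (hq : 0 ≤ q)
    (ht : 0 < t) (ht1 : t ≤ 1) {x : E} (hx : f (t • x) ≤ f 0 * q) :
    f x ≤ f 0 * q ^ t⁻¹ := by
  have hpow : f x ^ t ≤ f 0 ^ t * q := by
    have h0 : 0 < f 0 ^ (1 - t) := Real.rpow_pos_of_pos hf0 _
    refine le_of_mul_le_mul_right ?_ h0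
    calc f x ^ t * f 0 ^ (1 - t)
        ≤ f (t • x) := by
          simpa using hf.rpow_mul_rpow_le x 0 t (1 - t) ht.le (by linarith) (by ring)
      _ ≤ f 0 * q := hx
      _ = f 0 ^ t * q * f 0 ^ (1 - t) := by
          rw [mul_right_comm, ← Real.rpow_add hf0, add_sub_cancel, Real.rpow_one]
  calc f x = (f x ^ t) ^ t⁻¹ := (Real.rpow_rpow_inv (hf.nonneg x) ht.ne').symm
    _ ≤ (f 0 ^ t * q) ^ t⁻¹ := by
        have := hf.nonneg x
        gcongr
    _ = f 0 * q ^ t⁻¹ := by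
        rw [Real.mul_rpow (by positivity) hq, Real.rpow_rpow_inv hf0.le ht.ne']

end IsLogConcave

end LogConcave

theorem exists_seq_pairwise_le_dist_of_not_isBounded {X : Type*} [PseudoMetricSpace X]
    {C : Set X} (hC : ¬Bornology.IsBounded C) (δ : ℝ) :
    ∃ p : ℕ → X, (∀ i, p i ∈ C) ∧ Pairwise fun i j => δ ≤ dist (p i) (p j) := by
  have : Std.Symm fun x y : X => δ ≤ dist x y := ⟨fun x y h => by rwa [dist_comm]⟩
  refine exists_seq_of_forall_finset_exists' (· ∈ C) (fun x y => δ ≤ dist x y) fun s _ => ?_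
  by_contra! hclose
  refine hC (((Bornology.isBounded_biUnion_finset s).2
    fun x _ => isBounded_ball (x := x) (r := δ)).subset fun y hy => ?_)
  obtain ⟨x, hx, hxy⟩ := hclose y hy
  exact mem_biUnion hx (mem_ball'.2 hxy)

section ConvexSets

variable {E : Type*} [NormedAddCommGroup E] [NormedSpace ℝ E]

theorem ball_midpoint_subset_image_midpoint (a p : E) (ε : ℝ) :
    ball (midpoint ℝ a p) (ε / 2) ⊆ (midpoint ℝ · p) '' ball a ε := by
  intro z hz
  refine ⟨(2 : ℝ) • z - p, ?_, ?_⟩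
  · rw [mem_ball, dist_eq_norm] at hz ⊢
    have hdouble : (2 : ℝ) • z - p - a = (2 : ℝ) • (z - midpoint ℝ a p) := by
      rw [midpoint_eq_smul_add, invOf_eq_inv]
      module
    rw [hdouble, norm_smul, Real.norm_ofNat]
    linarith
  · simp [midpoint_eq_smul_add]

variable [MeasurableSpace E] [BorelSpace E] (μ : Measure E) [μ.IsAddHaarMeasure] {C : Set E}

/- Contracting a fixed ball in `C` halfway towards points of `C` that are far apart produces
infinitely many disjoint balls in `C`, all of the same measure. -/
theorem isBounded_of_convex_of_measure_ne_top (hC : Convex ℝ C) (hint : (interior C).Nonempty)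
    (hμ : μ C ≠ ∞) : Bornology.IsBounded C := by
  by_contra hunbounded
  obtain ⟨a, ha⟩ := hint
  obtain ⟨ε, hε, hball⟩ := Metric.mem_nhds_iff.1 (mem_interior_iff_mem_nhds.1 ha)
  obtain ⟨p, hpC, hp⟩ := exists_seq_pairwise_le_dist_of_not_isBounded hunbounded (2 * ε)
  let B : ℕ → Set E := fun i => ball (midpoint ℝ a (p i)) (ε / 2)
  have hBC : ⋃ i, B i ⊆ C := iUnion_subset fun i z hz => by
    obtain ⟨w, hw, rfl⟩ := ball_midpoint_subset_image_midpoint a (p i) ε hz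
    exact hC.midpoint_mem (hball hw) (hpC i)
  have hdisj : Pairwise (Function.onFun Disjoint B) := fun i j hij => by
    refine ball_disjoint_ball ?_
    have hdist : dist (midpoint ℝ a (p i)) (midpoint ℝ a (p j)) = dist (p i) (p j) / 2 := by
      rw [dist_eq_norm, dist_eq_norm, midpoint_eq_smul_add, midpoint_eq_smul_add, ← smul_sub,
        add_sub_add_left_eq_sub, norm_smul]
      norm_num
      ring
    linarith [hp hij]
  have hB : ∀ i, μ (B i) = μ (ball 0 (ε / 2)) := fun i => Measure.addHaar_ball_center μ _ _
  have hfinite := Measure.finite_const_le_meas_of_disjoint_iUnion μ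
    (measure_ball_pos μ (0 : E) (half_pos hε))
    (fun i => measurableSet_ball (x := midpoint ℝ a (p i))) hdisj (measure_ne_top_of_subset hBC hμ)
  exact infinite_univ (hfinite.subset fun i _ => (hB i).ge)

theorem interior_nonempty_of_convex_of_measure_ne_zero [FiniteDimensional ℝ E] (hC : Convex ℝ C)
    (hμ : μ C ≠ 0) : (interior C).Nonempty := by
  rw [nonempty_iff_ne_empty]
  intro hempty
  refine hμ (measure_mono_null ?_ (hC.addHaar_frontier μ))
  rw [frontier, hempty, sdiff_empty]
  exact subset_closure

end ConvexSets

namespace IsLogConcave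

section IntegrableOnSpace

variable {E : Type*} [NormedAddCommGroup E] [NormedSpace ℝ E] [FiniteDimensional ℝ E]
  [MeasurableSpace E] [BorelSpace E] {μ : Measure E} [μ.IsAddHaarMeasure] {f : E → ℝ}

theorem aemeasurable (hf : IsLogConcave f) : AEMeasurable f μ :=
  NullMeasurable.aemeasurable <|
    measurable_of_Ici fun c => (hf.convex_superlevel c).nullMeasurableSet μ

theorem exists_ball_subset_superlevel (hf : IsLogConcave f) (hint : Integrable f μ)
    (hpos : 0 < ∫ x, f x ∂μ) : ∃ c > 0, ∃ a : E, ∃ ε > 0, ball a ε ⊆ {x | c ≤ f x} := by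
  obtain ⟨m, hm⟩ : ∃ m : ℕ, μ {x | 1 / ((m : ℝ) + 1) ≤ f x} ≠ 0 := by
    by_contra! hnull
    refine ((integral_pos_iff_support_of_nonneg hf.nonneg hint).1 hpos).ne'
      (measure_mono_null (fun x hx => ?_) (measure_iUnion_null hnull))
    obtain ⟨m, hm⟩ := exists_nat_one_div_lt ((hf.nonneg x).lt_of_ne' hx)
    exact mem_iUnion.2 ⟨m, hm.le⟩
  obtain ⟨a, ha⟩ :=
    interior_nonempty_of_convex_of_measure_ne_zero μ (hf.convex_superlevel _) hm
  obtain ⟨ε, hε, hball⟩ := Metric.mem_nhds_iff.1 (mem_interior_iff_mem_nhds.1 ha)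
  exact ⟨_, Nat.one_div_pos_of_nat, a, ε, hε, hball⟩

theorem isBounded_superlevel (hf : IsLogConcave f) (hint : Integrable f μ)
    (hpos : 0 < ∫ x, f x ∂μ) {c : ℝ} (hc : 0 < c) : Bornology.IsBounded {x | c ≤ f x} := by
  obtain ⟨c', hc', a, ε, hε, hball⟩ := hf.exists_ball_subset_superlevel hint hpos
  have hinterior : (interior {x | min c c' ≤ f x}).Nonempty :=
    ⟨a, interior_mono (fun x hx => (min_le_right c c').trans (hball hx))
      (isOpen_ball.interior_eq.ge (mem_ball_self hε))⟩
  exact (isBounded_of_convex_of_measure_ne_top μ (hf.convex_superlevel _) hinterior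
    (hint.measure_ge_lt_top (lt_min hc hc')).ne).subset fun x hx => (min_le_left c c').trans hx

/- On the ball `ball (midpoint ℝ a x) (ε / 2)`, whose measure does not depend on `x`, one has
`f ≥ √(c * f x)`, so `∫ f` bounds `f x`. -/
theorem bddAbove_range (hf : IsLogConcave f) (hint : Integrable f μ)
    (hpos : 0 < ∫ x, f x ∂μ) : BddAbove (range f) := by
  obtain ⟨c, hc, a, ε, hε, hball⟩ := hf.exists_ball_subset_superlevel hint hpos
  set V : ℝ := μ.real (ball 0 (ε / 2)) with hV
  have hVpos : 0 < V := ENNReal.toReal_pos (measure_ball_pos μ 0 (half_pos hε)).ne'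
    measure_ball_lt_top.ne
  refine ⟨((∫ x, f x ∂μ) / V) ^ 2 / c, forall_mem_range.2 fun x => ?_⟩
  have hlower : ∀ z ∈ ball (midpoint ℝ a x) (ε / 2), √(c * f x) ≤ f z := fun z hz => by
    obtain ⟨w, hw, rfl⟩ := ball_midpoint_subset_image_midpoint a x ε hz
    refine Real.sqrt_le_iff.2 ⟨hf.nonneg _, ?_⟩
    exact (mul_le_mul_of_nonneg_right (hball hw) (hf.nonneg x)).trans (hf.mul_le_sq_midpoint w x)
  have hsqrt : √(c * f x) ≤ (∫ x, f x ∂μ) / V := by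
    rw [le_div_iff₀ hVpos]
    calc √(c * f x) * V = √(c * f x) * μ.real (ball (midpoint ℝ a x) (ε / 2)) := by
          rw [hV, Measure.real, Measure.real, Measure.addHaar_ball_center μ (midpoint ℝ a x)]
      _ ≤ ∫ z in ball (midpoint ℝ a x) (ε / 2), f z ∂μ :=
          setIntegral_ge_of_const_le_real measurableSet_ball measure_ball_lt_top.ne hlower
            hint.integrableOn
      _ ≤ ∫ x, f x ∂μ := setIntegral_le_integral hint (ae_of_all μ hf.nonneg)
  rw [le_div_iff₀' hc]
  exact (Real.sqrt_le_left (by positivity)).1 hsqrt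

theorem exists_le_mul_exp_neg_mul_norm (hf : IsLogConcave f) (hint : Integrable f μ)
    (hpos : 0 < ∫ x, f x ∂μ) (hf0 : 0 < f 0) :
    ∃ A b : ℝ, 0 < b ∧ ∀ x, f x ≤ A * Real.exp (-b * ‖x‖) := by
  obtain ⟨M, hM⟩ := hf.bddAbove_range hint hpos
  replace hM : ∀ x, f x ≤ M := forall_mem_range.1 hM
  obtain ⟨R, hR, hsub⟩ :=
    (hf.isBounded_superlevel hint hpos (half_pos hf0)).subset_ball_lt 0 0
  have hexp : ∀ x : E, Real.exp (-(Real.log 2 / R) * ‖x‖) = (1 / 2) ^ (‖x‖ / R) := fun x => by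
    rw [Real.rpow_def_of_pos (by norm_num), one_div, Real.log_inv]
    congr 1
    ring
  refine ⟨2 * M, Real.log 2 / R, div_pos (Real.log_pos one_lt_two) hR, fun x => ?_⟩
  rw [hexp]
  rcases le_or_gt R ‖x‖ with hx | hx
  · have hxpos : 0 < ‖x‖ := hR.trans_le hx
    have hhalf : f ((R / ‖x‖) • x) ≤ f 0 * (1 / 2) := by
      have hnotMem : (R / ‖x‖) • x ∉ {y | f 0 / 2 ≤ f y} := fun hmem => by
        have := mem_ball_zero_iff.1 (hsub hmem)
        rw [norm_smul, Real.norm_of_nonneg (by positivity), div_mul_cancel₀ _ hxpos.ne'] at this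
        exact this.false
      rw [mul_one_div]
      exact (not_le.1 hnotMem).le
    have hdecay := hf.le_mul_rpow_inv_of_smul_le hf0 (by norm_num) (by positivity)
      ((div_le_one hxpos).2 hx) hhalf
    rw [inv_div] at hdecay
    refine hdecay.trans ?_
    gcongr
    linarith [hM 0]
  · have hxR : (1 / 2 : ℝ) ≤ (1 / 2) ^ (‖x‖ / R) := by
      simpa using Real.rpow_le_rpow_of_exponent_ge (x := 1 / 2) (by norm_num) (by norm_num)
        ((div_le_one hR).2 hx.le)
    nlinarith [hM x, hM 0]

end IntegrableOnSpace

theorem integrableOn_Ioi_rpow_mul_comp_smul {E : Type*} [NormedAddCommGroup E]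
    [NormedSpace ℝ E] {f : E → ℝ} (hf : IsLogConcave f) {A b p : ℝ} (hb : 0 < b)
    (hdecay : ∀ x, f x ≤ A * Real.exp (-b * ‖x‖)) (hp : 0 < p) {x : E} (hx : x ≠ 0) :
    IntegrableOn (fun r : ℝ => r ^ (p - 1) * f (r • x)) (Ioi 0) := by
  have hdom : IntegrableOn
      (fun r : ℝ => A * (r ^ (p - 1) * Real.exp (-(b * ‖x‖) * r ^ (1 : ℝ)))) (Ioi 0) :=
    (integrableOn_rpow_mul_exp_neg_mul_rpow (by linarith) one_pos
      (mul_pos hb (norm_pos_iff.2 hx))).const_mul A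
  have hray : AEMeasurable (fun r : ℝ => f (r • x)) :=
    (hf.comp_linearMap (LinearMap.toSpanSingleton ℝ E x)).aemeasurable
  refine hdom.mono' ((by fun_prop : AEMeasurable (fun r : ℝ => r ^ (p - 1))
    (volume.restrict (Ioi 0))).mul hray.restrict).aestronglyMeasurable ?_
  filter_upwards [ae_restrict_mem measurableSet_Ioi] with r (hr : 0 < r)
  rw [Real.norm_of_nonneg (mul_nonneg (by positivity) (hf.nonneg _)), Real.rpow_one]
  calc r ^ (p - 1) * f (r • x) ≤ r ^ (p - 1) * (A * Real.exp (-b * ‖r • x‖)) := by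
        gcongr
        exact hdecay _
    _ = A * (r ^ (p - 1) * Real.exp (-(b * ‖x‖) * r)) := by
        rw [norm_smul, Real.norm_of_nonneg hr.le]
        ring_nf

end IsLogConcave

section RadialMoment

variable {E : Type*} [AddCommGroup E] [Module ℝ E] {p : ℝ} {g : E → ℝ≥0∞}

/-- The moment `∫₀^∞ r^(p-1) g(r x) dr` of `g` along the ray through `x`. As a Lebesgue integral it
makes sense for every `g`; its superlevel sets are the extended-real form of K. Ball's bodies. -/
def radialMoment (p : ℝ) (g : E → ℝ≥0∞) (x : E) : ℝ≥0∞ :=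
  ∫⁻ r in Ioi (0 : ℝ), ENNReal.ofReal (r ^ (p - 1)) * g (r • x)

theorem ofReal_rpow_mul_radialMoment_smul {s : ℝ} (hs : 0 < s) (x : E) :
    ENNReal.ofReal (s ^ p) * radialMoment p g (s • x) = radialMoment p g x := by
  have himage : (· * s) '' Ioi (0 : ℝ) = Ioi 0 := by
    simpa using (OrderIso.mulRight₀ s hs).image_Ioi 0
  have hsub := lintegral_image_eq_lintegral_abs_deriv_mul (s := Ioi 0) (f := (· * s))
    (f' := fun _ => s) measurableSet_Ioi (fun r _ => (hasDerivAt_mul_const s).hasDerivWithinAt)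
    (mul_left_injective₀ hs.ne').injOn fun r => ENNReal.ofReal (r ^ (p - 1)) * g (r • x)
  rw [himage] at hsub
  rw [radialMoment, radialMoment, hsub, ← lintegral_const_mul' _ _ ENNReal.ofReal_ne_top]
  refine setLIntegral_congr_fun measurableSet_Ioi fun r (hr : 0 < r) => ?_
  have hpow : s ^ p * r ^ (p - 1) = s * (r * s) ^ (p - 1) := by
    rw [Real.mul_rpow hr.le hs.le, Real.rpow_sub_one hs.ne']
    field_simp
  rw [abs_of_pos hs, ← mul_assoc, ← mul_assoc, ← ENNReal.ofReal_mul (by positivity),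
    ← ENNReal.ofReal_mul hs.le, hpow, smul_smul]

theorem lintegral_volumeIoiPow_comp_smul (n : ℕ) (x : E) :
    ∫⁻ r, g (r.1 • x) ∂Measure.volumeIoiPow n = radialMoment (n + 1) g x := by
  rw [Measure.volumeIoiPow, lintegral_withDensity_eq_lintegral_mul_non_measurable₀ _ (by fun_prop)
    (ae_of_all _ fun _ => ENNReal.ofReal_lt_top)]
  simp only [Pi.mul_apply]
  rw [lintegral_subtype_comap measurableSet_Ioi fun r : ℝ => ENNReal.ofReal (r ^ n) * g (r • x),
    radialMoment]
  simp only [add_sub_cancel_right, Real.rpow_natCast]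

theorem setLIntegral_rpow_sub_one_of_rpow_le (hp : 0 < p) (T : ℝ≥0∞) :
    ∫⁻ r in Ioi (0 : ℝ) ∩ {r | ENNReal.ofReal (r ^ p) ≤ T}, ENNReal.ofReal (r ^ (p - 1)) =
      T / ENNReal.ofReal p := by
  induction T with
  | top =>
    have hdiverges : ∫⁻ r in Ioi (0 : ℝ), ENNReal.ofReal (r ^ (p - 1)) = ∞ := by
      by_contra hfinite
      refine not_integrableOn_Ioi_rpow (p - 1) ?_
      refine (lintegral_ofReal_ne_top_iff_integrable (by fun_prop) ?_).1 hfinite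
      filter_upwards [ae_restrict_mem measurableSet_Ioi] with r (hr : 0 < r)
      exact Real.rpow_nonneg hr.le _
    simpa [ENNReal.top_div] using hdiverges
  | coe t =>
    have hset : Ioi (0 : ℝ) ∩ {r | ENNReal.ofReal (r ^ p) ≤ t} = Ioc 0 ((t : ℝ) ^ p⁻¹) := by
      ext r
      simp only [mem_inter_iff, mem_Ioi, mem_ofPred_eq, mem_Ioc]
      refine and_congr_right fun hr => ?_
      rw [ENNReal.ofReal_le_coe, Real.le_rpow_inv_iff_of_pos hr.le t.coe_nonneg hp]
    have hbound : (0 : ℝ) ≤ (t : ℝ) ^ p⁻¹ := by positivity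
    rw [hset, ← ofReal_integral_eq_lintegral_ofReal
      (intervalIntegral.intervalIntegrable_rpow' (by linarith)).1
      ((ae_restrict_mem measurableSet_Ioc).mono fun r hr => Real.rpow_nonneg hr.1.le _),
      ← intervalIntegral.integral_of_le hbound, integral_rpow (Or.inl (by linarith)),
      sub_add_cancel, Real.rpow_inv_rpow t.coe_nonneg hp.ne', Real.zero_rpow hp.ne', sub_zero,
      ENNReal.ofReal_div_of_pos hp, ENNReal.ofReal_coe_nnreal]

theorem mul_radialMoment_indicator_superlevel (hp : 0 < p) {c : ℝ≥0∞} (hc : c ≠ 0) (hc' : c ≠ ∞)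
    (x : E) :
    ENNReal.ofReal p * c * radialMoment p ({y | c ≤ radialMoment p g y}.indicator 1) x =
      radialMoment p g x := by
  have hmem : ∀ r ∈ Ioi (0 : ℝ), r • x ∈ {y | c ≤ radialMoment p g y} ↔
      ENNReal.ofReal (r ^ p) ≤ radialMoment p g x / c := fun r (hr : 0 < r) => by
    have hr' : ENNReal.ofReal (r ^ p) ≠ 0 := by simpa using Real.rpow_pos_of_pos hr p
    rw [← ofReal_rpow_mul_radialMoment_smul hr x, ENNReal.le_div_iff_mul_le (.inl hc) (.inl hc'),
      ENNReal.mul_le_mul_iff_right hr' ENNReal.ofReal_ne_top, mem_ofPred_eq]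
  have hmeas : MeasurableSet {r : ℝ | ENNReal.ofReal (r ^ p) ≤ radialMoment p g x / c} :=
    measurableSet_le (by fun_prop) measurable_const
  have hvolume : radialMoment p ({y | c ≤ radialMoment p g y}.indicator 1) x =
      radialMoment p g x / c / ENNReal.ofReal p := by
    rw [← setLIntegral_rpow_sub_one_of_rpow_le hp, inter_comm, ← Measure.restrict_restrict hmeas,
      ← lintegral_indicator hmeas]
    refine setLIntegral_congr_fun measurableSet_Ioi fun r hr => ?_
    simp only [indicator_apply, hmem r hr, mem_ofPred_eq, Pi.one_apply, mul_ite, mul_one, mul_zero]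
  rw [hvolume, mul_assoc, mul_left_comm, ENNReal.mul_div_cancel (by simpa) ENNReal.ofReal_ne_top,
    ENNReal.mul_div_cancel hc hc']

end RadialMoment

section PolarCoordinates

variable {E : Type*} [NormedAddCommGroup E] [NormedSpace ℝ E] [FiniteDimensional ℝ E]
  [MeasurableSpace E] [BorelSpace E] {μ : Measure E} [μ.IsAddHaarMeasure] {g : E → ℝ≥0∞}

theorem aemeasurable_radialMoment (p : ℝ) (hg : AEMeasurable g μ) :
    AEMeasurable (radialMoment p g) μ := by
  have hsmul : Measure.QuasiMeasurePreserving (fun z : E × ℝ => z.2 • z.1)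
      (μ.prod (volume.restrict (Ioi 0))) μ := by
    refine QuasiMeasurePreserving.prod_of_left (by fun_prop) ?_
    filter_upwards [ae_restrict_mem measurableSet_Ioi] with r hr
    exact Measure.quasiMeasurePreserving_smul μ (ne_of_gt hr)
  have hkernel : AEMeasurable (fun z : E × ℝ => ENNReal.ofReal (z.2 ^ (p - 1)) * g (z.2 • z.1))
      (μ.prod (volume.restrict (Ioi 0))) :=
    (by fun_prop : Measurable fun z : E × ℝ => ENNReal.ofReal (z.2 ^ (p - 1))).aemeasurable.mul
      (hg.comp_quasiMeasurePreserving hsmul)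
  exact hkernel.lintegral_prod_right'

variable [Nontrivial E]

theorem lintegral_eq_lintegral_toSphere_radialMoment (hg : AEMeasurable g μ) :
    ∫⁻ x, g x ∂μ =
      ∫⁻ θ : sphere (0 : E) 1, radialMoment (Module.finrank ℝ E) g θ ∂μ.toSphere := by
  have hpolar := μ.measurePreserving_homeomorphUnitSphereProd.symm
    (homeomorphUnitSphereProd E).toMeasurableEquiv
  have hzero : MeasurableSet ({0}ᶜ : Set E) := (measurableSet_singleton _).compl
  have hval : Measure.QuasiMeasurePreserving (Subtype.val : ({0}ᶜ : Set E) → E)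
      (μ.comap Subtype.val) μ :=
    ⟨measurable_subtype_coe, by
      rw [map_comap_subtype_coe hzero]
      exact Measure.restrict_le_self.absolutelyContinuous⟩
  have hg' : AEMeasurable (fun z : sphere (0 : E) 1 × Ioi (0 : ℝ) => g (z.2.1 • z.1.1))
      (μ.toSphere.prod (Measure.volumeIoiPow (Module.finrank ℝ E - 1))) :=
    hg.comp_quasiMeasurePreserving (hval.comp hpolar.quasiMeasurePreserving)
  calc ∫⁻ x, g x ∂μ = ∫⁻ x : ({0}ᶜ : Set E), g x ∂μ.comap Subtype.val := by
        rw [lintegral_subtype_comap hzero, restrict_compl_singleton]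
    _ = ∫⁻ z, g (z.2.1 • z.1.1)
          ∂μ.toSphere.prod (Measure.volumeIoiPow (Module.finrank ℝ E - 1)) :=
        (hpolar.lintegral_comp_emb (MeasurableEquiv.measurableEmbedding _) _).symm
    _ = ∫⁻ θ : sphere (0 : E) 1, radialMoment (Module.finrank ℝ E) g θ ∂μ.toSphere := by
        rw [lintegral_prod _ hg']
        refine lintegral_congr fun θ => ?_
        rw [lintegral_volumeIoiPow_comp_smul _ θ.1, Nat.cast_pred Module.finrank_pos,
          sub_add_cancel]

-- Both sides have the same radial moment in every direction.
theorem lintegral_eq_mul_measure_superlevel_radialMoment (hg : AEMeasurable g μ) {c : ℝ≥0∞}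
    (hc : c ≠ 0) (hc' : c ≠ ∞) :
    ∫⁻ x, g x ∂μ =
      Module.finrank ℝ E * c * μ {x | c ≤ radialMoment (Module.finrank ℝ E) g x} := by
  set K := {x | c ≤ radialMoment (Module.finrank ℝ E) g x}
  have hK : NullMeasurableSet K μ :=
    nullMeasurableSet_le aemeasurable_const (aemeasurable_radialMoment _ hg)
  have hfinrank : (0 : ℝ) < Module.finrank ℝ E := mod_cast Module.finrank_pos
  rw [← lintegral_indicator_one₀ hK, lintegral_eq_lintegral_toSphere_radialMoment hg,
    lintegral_eq_lintegral_toSphere_radialMoment (g := K.indicator 1)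
      (aemeasurable_one.indicator₀ hK),
    ← lintegral_const_mul' _ _ (by finiteness)]
  refine lintegral_congr fun θ => ?_
  simpa using (mul_radialMoment_indicator_superlevel (g := g) hfinrank hc hc' θ.1).symm

end PolarCoordinates

section Subspace

theorem map_subtypeVal_hausdorffMeasure {X : Type*} [EMetricSpace X] [MeasurableSpace X]
    [BorelSpace X] (s : Set X) {d : ℝ} (hd : 0 ≤ d) :
    (μH[d] : Measure s).map Subtype.val = (μH[d] : Measure X).restrict s := by
  rw [isometry_subtype_coe.map_hausdorffMeasure (.inl hd), Subtype.range_coe]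

variable {E : Type*} [NormedAddCommGroup E] [NormedSpace ℝ E] [MeasurableSpace E] [BorelSpace E]

theorem setLIntegral_submodule_eq_mul_hausdorffMeasure_superlevel_radialMoment {g : E → ℝ≥0∞}
    (H : Submodule ℝ E) (hH : 0 < Module.finrank ℝ H)
    (hg : AEMeasurable (fun x : H => g x) μH[Module.finrank ℝ H]) {c : ℝ≥0∞}
    (hc : c ≠ 0) (hc' : c ≠ ∞) :
    ∫⁻ x in (H : Set E), g x ∂μH[Module.finrank ℝ H] =
      Module.finrank ℝ H * c *
        μH[Module.finrank ℝ H] ({x | c ≤ radialMoment (Module.finrank ℝ H) g x} ∩ H) := by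
  have : FiniteDimensional ℝ H := .of_finrank_pos hH
  have : Nontrivial H := Module.nontrivial_of_finrank_pos hH
  have := isAddHaarMeasure_hausdorffMeasure (E := H)
  have hHmeas : MeasurableSet (H : Set E) := H.closed_of_finiteDimensional.measurableSet
  have hval : MeasurableEmbedding (Subtype.val : H → E) :=
    MeasurableEmbedding.subtype_coe hHmeas
  have hmap : (μH[Module.finrank ℝ H] : Measure H).map Subtype.val =
      μH[Module.finrank ℝ H].restrict H :=
    map_subtypeVal_hausdorffMeasure (H : Set E) (Nat.cast_nonneg _)
  rw [← Measure.restrict_apply' hHmeas, ← hmap, hval.lintegral_map, hval.map_apply]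
  exact lintegral_eq_mul_measure_superlevel_radialMoment hg hc hc'

end Subspace

theorem mem_ballBody_iff_le_radialMoment {n : ℕ} {f : EuclideanSpace ℝ (Fin n) → ℝ} {p : ℝ}
    {x : EuclideanSpace ℝ (Fin n)} (hf : ∀ y, 0 ≤ f y)
    (hray : IntegrableOn (fun r : ℝ => r ^ (p - 1) * f (r • x)) (Ioi 0)) :
    x ∈ ballBody p f ↔
      ENNReal.ofReal (f 0 / p) ≤ radialMoment p (fun y => ENNReal.ofReal (f y)) x := by
  have hnonneg : ∀ r ∈ Ioi (0 : ℝ), 0 ≤ r ^ (p - 1) * f (r • x) := fun r (hr : 0 < r) =>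
    mul_nonneg (by positivity) (hf _)
  have hmoment : radialMoment p (fun y => ENNReal.ofReal (f y)) x =
      ENNReal.ofReal (∫ r in Ioi (0 : ℝ), r ^ (p - 1) * f (r • x)) := by
    rw [ofReal_integral_eq_lintegral_ofReal hray
      ((ae_restrict_mem measurableSet_Ioi).mono hnonneg)]
    exact setLIntegral_congr_fun measurableSet_Ioi fun r (hr : 0 < r) =>
      (ENNReal.ofReal_mul (by positivity)).symm
  rw [hmoment, ENNReal.ofReal_le_ofReal_iff (setIntegral_nonneg measurableSet_Ioi hnonneg),
    ballBody, mem_ofPred_eq]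

/- Only almost everywhere: at the origin the ray integral diverges, so its Bochner value is `0` and
`0 ∉ ballBody p f`, whereas `radialMoment p _ 0 = ∞`. -/
theorem ballBody_ae_eq_superlevel_radialMoment {n : ℕ} {f : EuclideanSpace ℝ (Fin n) → ℝ}
    (hf : IsLogConcave f) (hint : Integrable f) (hpos : 0 < ∫ x, f x) (hf0 : 0 < f 0) {p : ℝ}
    (hp : 0 < p) {ν : Measure (EuclideanSpace ℝ (Fin n))} (hν : ν {0} = 0) :
    ballBody p f =ᵐ[ν]
      {x | ENNReal.ofReal (f 0 / p) ≤ radialMoment p (fun y => ENNReal.ofReal (f y)) x} := by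
  obtain ⟨A, b, hb, hdecay⟩ := hf.exists_le_mul_exp_neg_mul_norm hint hpos hf0
  refine Filter.eventuallyEq_set.2 ?_
  filter_upwards [compl_mem_ae_iff.2 hν] with x hx
  exact mem_ballBody_iff_le_radialMoment hf.nonneg
    (hf.integrableOn_Ioi_rpow_mul_comp_smul hb hdecay hp hx)

theorem stmt16_general {n : ℕ} {f : EuclideanSpace ℝ (Fin n) → ℝ} (hf : IsLogConcave f)
    (hint : Integrable f) (hpos : 0 < ∫ x, f x) (hf0 : 0 < f 0)
    (H : Submodule ℝ (EuclideanSpace ℝ (Fin n))) (hH : 0 < Module.finrank ℝ H) :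
    ∫⁻ x in (H : Set (EuclideanSpace ℝ (Fin n))), ENNReal.ofReal (f x) ∂μH[Module.finrank ℝ H] =
      ENNReal.ofReal (f 0) * μH[Module.finrank ℝ H] (ballBody (Module.finrank ℝ H) f ∩ H) := by
  have hk : (0 : ℝ) < Module.finrank ℝ H := mod_cast hH
  have hHaar := isAddHaarMeasure_hausdorffMeasure (E := H)
  have hmeas : AEMeasurable (fun x : H => ENNReal.ofReal (f x)) μH[Module.finrank ℝ H] :=
    (hf.comp_linearMap H.subtype).aemeasurable.ennreal_ofReal
  have hbody := ballBody_ae_eq_superlevel_radialMoment hf hint hpos hf0 hk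
    ((Measure.nullSingletonClass_hausdorff (EuclideanSpace ℝ (Fin n)) hk).measure_singleton 0)
  have hsection := measure_congr (hbody.inter (ae_eq_refl (H : Set (EuclideanSpace ℝ (Fin n)))))
  have hc : ENNReal.ofReal (f 0 / Module.finrank ℝ H) ≠ 0 :=
    (ENNReal.ofReal_pos.2 (div_pos hf0 hk)).ne'
  rw [setLIntegral_submodule_eq_mul_hausdorffMeasure_superlevel_radialMoment
    (g := fun x => ENNReal.ofReal (f x)) H hH hmeas hc ENNReal.ofReal_ne_top,
    hsection, ← ENNReal.ofReal_natCast, ← ENNReal.ofReal_mul hk.le,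
    mul_div_cancel₀ _ hk.ne']

/-- For a geometric log-concave `f` with `f 0 = ‖f‖_∞ = 1`:
`∫_H f = vol_k(K_k(f) ∩ H)`, where `K_k(f)` is K. Ball's body. -/
theorem stmt16 (n : ℕ) (f : EuclideanSpace ℝ (Fin n) → ℝ)
    (hf : IsGeomLogConcave f) (hf0 : f 0 = 1)
    (k : ℕ) (hk1 : 1 ≤ k) (hkn : k ≤ n - 1)
    (H : Submodule ℝ (EuclideanSpace ℝ (Fin n))) (hH : Module.finrank ℝ H = k) :
    (∫⁻ x in (H : Set (EuclideanSpace ℝ (Fin n))), ENNReal.ofReal (f x) ∂μH[(k : ℝ)]) =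
      μH[(k : ℝ)] (ballBody k f ∩ (H : Set _)) := by
  subst hH
  simpa [hf0] using stmt16_general ⟨hf.nonneg, hf.logConcave⟩ hf.integrable hf.integral_pos
    (hf0 ▸ one_pos) H hk1
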